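/- arXiv:2503.06817 — 5 statements merged into one kernel-verified Lean document; each statement's English description precedes it below -/
import Mathlib

section
/- Let q ≥ 1, let W ∈ ℝ^{q×q} be a diagonal matrix with strictly positive diagonal entries, and let J ∈ ℝ^{q×q} be such that JW is symmetric and negative semidefinite. Then there exist an invertible matrix P ∈ ℝ^{q×q} and nonnegative real numbers λ_1,…,λ_q such that PᵀP = W^{-1} (in particular PᵀP is diagonal with strictly positive diagonal entries) and P·J = −diag(λ_1,…,λ_q)·P; that is, the model satisfies a stability structure (P, a, λ) with a_k > 0 and λ_k ≥ 0. -/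
open Matrix

/-!
Write `W⁻¹ = P₀ᴴ P₀`, so that congruence by `P₀` turns `W` into the identity. A unitary change of
basis preserves the identity and diagonalizes the Hermitian matrix `P₀ (J W) P₀ᴴ`, so a single `P`
satisfies `P W Pᴴ = 1` and `P (J W) Pᴴ = D` with `D` diagonal. As `W Pᴴ` is then the inverse of `P`,
the second equation says `P J = D P`, and `D` inherits the sign of `J W`.
-/

theorem mul_left_eq_of_mul_mul_eq_one {M : Type*} [Monoid M] [IsDedekindFiniteMonoid M]
    {p w r : M} (h : p * w * r = 1) (j : M) : p * j = p * (j * w) * r * p := by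
  have h_inv : w * r * p = 1 := mul_eq_one_comm.mp (by rwa [← mul_assoc])
  calc p * j = p * j * (w * r * p) := by rw [h_inv, mul_one]
    _ = p * (j * w) * r * p := by simp only [mul_assoc]

theorem mul_eq_inv_of_mul_mul_eq_one {n R : Type*} [Fintype n] [DecidableEq n] [CommRing R]
    {P W Q : Matrix n n R} (h : P * W * Q = 1) : Q * P = W⁻¹ := by
  refine (inv_eq_left_inv ?_).symm
  rw [mul_assoc, mul_eq_one_comm, h]

theorem inv_diagonal_of_ne_zero {n K : Type*} [Fintype n] [DecidableEq n] [Field K] {w : n → K}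
    (hw : ∀ i, w i ≠ 0) : (diagonal w)⁻¹ = diagonal fun i ↦ (w i)⁻¹ :=
  inv_eq_left_inv (by simp [hw])

theorem posSemidef_neg_of_dotProduct_mulVec_nonpos {n R : Type*} [Fintype n] [CommRing R]
    [PartialOrder R] [IsOrderedAddMonoid R] [StarRing R] [TrivialStar R] {A : Matrix n n R}
    (hA : A.IsSymm) (hA_nonpos : ∀ x : n → R, x ⬝ᵥ A *ᵥ x ≤ 0) : (-A).PosSemidef :=
  .of_dotProduct_mulVec_nonneg (isHermitian_iff_isSymm.mpr hA).neg fun x ↦ by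
    simpa only [star_trivial, neg_mulVec, dotProduct_neg, neg_nonneg] using hA_nonpos x

section RCLike

variable {n 𝕜 : Type*} [Fintype n] [DecidableEq n] [RCLike 𝕜] {A J W : Matrix n n 𝕜}

open scoped MatrixOrder ComplexOrder

theorem exists_mul_mul_conjTranspose_eq_one (hW : W.PosDef) :
    ∃ P : Matrix n n 𝕜, P * W * Pᴴ = 1 := by
  obtain ⟨S, hS, hWS⟩ :=
    CStarAlgebra.isStrictlyPositive_iff_eq_star_mul_self.mp hW.isStrictlyPositive
  have hS_det : IsUnit S.det := (isUnit_iff_isUnit_det S).mp hS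
  have hS_inv : S * S⁻¹ = 1 := mul_nonsing_inv S hS_det
  refine ⟨(S⁻¹)ᴴ, ?_⟩
  calc (S⁻¹)ᴴ * W * (S⁻¹)ᴴᴴ = (S * S⁻¹)ᴴ * (S * S⁻¹) := by
        rw [hWS, star_eq_conjTranspose, conjTranspose_conjTranspose, conjTranspose_mul]
        simp only [mul_assoc]
    _ = 1 := by rw [hS_inv, conjTranspose_one, one_mul]

theorem exists_mul_mul_conjTranspose_eq_one_and_eq_diagonal (hW : W.PosDef)
    (hA : A.IsHermitian) :
    ∃ (P : Matrix n n 𝕜) (d : n → ℝ),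
      P * W * Pᴴ = 1 ∧ P * A * Pᴴ = diagonal fun i ↦ (d i : 𝕜) := by
  obtain ⟨P₀, hP₀⟩ := exists_mul_mul_conjTranspose_eq_one hW
  have hB : (P₀ * A * P₀ᴴ).IsHermitian := isHermitian_mul_mul_conjTranspose P₀ hA
  let U : Matrix n n 𝕜 := hB.eigenvectorUnitary
  have congr_mul (X : Matrix n n 𝕜) : Uᴴ * P₀ * X * (Uᴴ * P₀)ᴴ = Uᴴ * (P₀ * X * P₀ᴴ) * U := by
    simp only [conjTranspose_mul, conjTranspose_conjTranspose, mul_assoc]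
  refine ⟨Uᴴ * P₀, hB.eigenvalues, ?_, ?_⟩
  · rw [congr_mul, hP₀, mul_one]
    exact Unitary.coe_star_mul_self hB.eigenvectorUnitary
  · rw [congr_mul]
    exact (Unitary.conjStarAlgAut_star_apply _ _).symm.trans
      hB.conjStarAlgAut_star_eigenvectorUnitary

theorem stmt_1_general (hW : W.PosDef) (hJW : (-(J * W)).PosSemidef) :
    ∃ (P : Matrix n n 𝕜) (lam : n → ℝ),
      IsUnit P.det ∧ (∀ k, 0 ≤ lam k) ∧ Pᴴ * P = W⁻¹ ∧
      P * J = -(diagonal (fun k ↦ (lam k : 𝕜)) * P) := by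
  obtain ⟨P, lam, hPW, hPJW⟩ :=
    exists_mul_mul_conjTranspose_eq_one_and_eq_diagonal hW hJW.isHermitian
  refine ⟨P, lam, ?_, ?_, mul_eq_inv_of_mul_mul_eq_one hPW, ?_⟩
  · exact isUnit_det_of_right_inverse (by rwa [← mul_assoc])
  · have h_diag : (diagonal fun k ↦ (lam k : 𝕜)).PosSemidef :=
      hPJW ▸ hJW.mul_mul_conjTranspose_same P
    exact fun k ↦ RCLike.ofReal_nonneg.mp (posSemidef_diagonal_iff.mp h_diag k)
  · rw [← hPJW, ← neg_mul J W, ← mul_left_eq_of_mul_mul_eq_one hPW, mul_neg, neg_neg]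

end RCLike

/-- If `W` is a diagonal matrix with strictly positive diagonal entries and `J·W` is
symmetric and negative semidefinite, then `J` satisfies a stability structure
`(P, a, λ)`: `P` invertible, `Pᵀ·P = W⁻¹` diagonal with strictly positive diagonal
entries, and `P·J = -diag(λ)·P` with `λ_k ≥ 0`. -/
theorem stmt_1 (q : ℕ) (hq : 1 ≤ q) (w : Fin q → ℝ) (hw : ∀ i, 0 < w i)
    (J : Matrix (Fin q) (Fin q) ℝ)
    (hsymm : (J * Matrix.diagonal w).IsSymm)
    (hnsd : ∀ x : Fin q → ℝ, x ⬝ᵥ (J * Matrix.diagonal w).mulVec x ≤ 0) :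
    ∃ (P : Matrix (Fin q) (Fin q) ℝ) (lam : Fin q → ℝ),
      IsUnit P.det ∧ (∀ k, 0 ≤ lam k) ∧
      Pᵀ * P = Matrix.diagonal (fun i => (w i)⁻¹) ∧
      (∀ i, 0 < (w i)⁻¹) ∧
      P * J = -(Matrix.diagonal lam * P) := by
  obtain ⟨P, lam, hP, hlam, hPP, hPJ⟩ := stmt_1_general (posDef_diagonal_iff.mpr hw)
    (posSemidef_neg_of_dotProduct_mulVec_nonpos hsymm hnsd)
  exact ⟨P, lam, hP, hlam, hPP.trans (inv_diagonal_of_ne_zero fun i ↦ (hw i).ne'),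
    fun i ↦ inv_pos.mpr (hw i), hPJ⟩
end

section
/- Let q ≥ 1, let M ∈ ℝ^{q×q} be invertible with first row equal to the all-ones vector 𝟙ᵀ, let S = diag(s_1,…,s_q), let Λ = M^{-1}·S·M, let ω ∈ ℝ^q satisfy Σ_{k=1}^q ω_k = 1, let E = ω𝟙ᵀ (so E_{kj} = ω_k), let c ∈ ℝ, and set J = Λ(E − I) + cE. Then for every k ∈ {2,…,q}, the vector v_k = M^{-1}e_k satisfies J·v_k = −s_k·v_k (i.e., v_k is an eigenvector of J with eigenvalue −s_k), and the all-ones vector is a left eigenvector of J with eigenvalue c, i.e., 𝟙ᵀ·J = c·𝟙ᵀ. -/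
open Matrix

/-!
The row `u = M i` of the conserved moment is a left eigenvector of `Λ = M⁻¹ S M`, and the columns
of `M⁻¹` are its right eigenvectors. The equilibrium `E = ω uᵀ` annihilates every column
other than the `i`-th, since these are orthogonal to `u`; there `J` acts as `-Λ`. On the left,
`uᵀ E = uᵀ` because `u ⬝ᵥ ω = 1`, so `uᵀ Λ (E - 1)` vanishes and only the source term survives.
-/

section MomentBasis

variable {n R : Type*} [Fintype n] [DecidableEq n] [CommRing R] {M : Matrix n n R}

theorem row_dotProduct_inv_mulVec_single_of_ne (hM : IsUnit M.det) {i k : n} (hik : i ≠ k) :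
    M i ⬝ᵥ (M⁻¹ *ᵥ Pi.single k 1) = 0 := by
  calc M i ⬝ᵥ (M⁻¹ *ᵥ Pi.single k 1) = (M *ᵥ (M⁻¹ *ᵥ Pi.single k 1)) i := rfl
    _ = (Pi.single k 1 : n → R) i := by rw [mulVec_mulVec, mul_nonsing_inv M hM, one_mulVec]
    _ = 0 := Pi.single_eq_of_ne hik 1

theorem inv_mul_diagonal_mul_mulVec_inv_mulVec_single (hM : IsUnit M.det) (s : n → R) (k : n) :
    (M⁻¹ * diagonal s * M) *ᵥ (M⁻¹ *ᵥ Pi.single k 1) = s k • (M⁻¹ *ᵥ Pi.single k 1) := by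
  calc (M⁻¹ * diagonal s * M) *ᵥ (M⁻¹ *ᵥ Pi.single k 1)
      = M⁻¹ *ᵥ (diagonal s *ᵥ Pi.single k 1) := by
        rw [mulVec_mulVec, mul_nonsing_inv_cancel_right _ _ hM, mulVec_mulVec]
    _ = M⁻¹ *ᵥ (s k • Pi.single k 1) := by
        rw [diagonal_mulVec_single, ← Pi.single_smul', smul_eq_mul]
    _ = s k • (M⁻¹ *ᵥ Pi.single k 1) := mulVec_smul _ _ _

theorem row_vecMul_inv_mul_diagonal_mul (hM : IsUnit M.det) (s : n → R) (i : n) :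
    M i ᵥ* (M⁻¹ * diagonal s * M) = s i • M i := by
  calc M i ᵥ* (M⁻¹ * diagonal s * M) = (M * (M⁻¹ * diagonal s * M)) i := rfl
    _ = (diagonal s * M) i := by rw [Matrix.mul_assoc, mul_nonsing_inv_cancel_left _ _ hM]
    _ = s i • M i := by ext j; exact diagonal_mul s M i j

end MomentBasis

/-- The Jacobian `A (E - I) + c E` of a collision operator with relaxation matrix `A`, equilibrium
map `E = ω uᵀ` and linear source coefficient `c`. The row `u` is the conserved moment, which is
the all-ones vector in the lattice Boltzmann model. -/
def collisionJacobian {n R : Type*} [Fintype n] [DecidableEq n] [Ring R]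
    (A : Matrix n n R) (ω u : n → R) (c : R) : Matrix n n R :=
  A * (vecMulVec ω u - 1) + c • vecMulVec ω u

section CollisionJacobian

variable {n R : Type*} [Fintype n] [DecidableEq n]
  {A : Matrix n n R} {u v ω : n → R} {a : R}

theorem collisionJacobian_mulVec_of_dotProduct_eq_zero [Ring R] (hA : A *ᵥ v = a • v)
    (huv : u ⬝ᵥ v = 0) (c : R) : collisionJacobian A ω u c *ᵥ v = -a • v := by
  have hE : vecMulVec ω u *ᵥ v = 0 := by
    rw [vecMulVec_mulVec, huv, MulOpposite.op_zero, zero_smul]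
  calc collisionJacobian A ω u c *ᵥ v
      = A *ᵥ (vecMulVec ω u *ᵥ v - v) + c • (vecMulVec ω u *ᵥ v) := by
        rw [collisionJacobian, add_mulVec, ← mulVec_mulVec, sub_mulVec, one_mulVec, smul_mulVec]
    _ = -a • v := by rw [hE, zero_sub, mulVec_neg, hA, smul_zero, add_zero, neg_smul]

theorem vecMul_collisionJacobian_of_dotProduct_eq_one [CommRing R] (hA : u ᵥ* A = a • u)
    (huω : u ⬝ᵥ ω = 1) (c : R) : u ᵥ* collisionJacobian A ω u c = c • u := by
  have hE : u ᵥ* vecMulVec ω u = u := by rw [vecMul_vecMulVec, huω, one_smul]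
  calc u ᵥ* collisionJacobian A ω u c
      = a • (u ᵥ* vecMulVec ω u - u) + c • (u ᵥ* vecMulVec ω u) := by
        rw [collisionJacobian, vecMul_add, ← vecMul_vecMul, hA, smul_vecMul, vecMul_sub,
          vecMul_one, vecMul_smul]
    _ = c • u := by rw [hE, sub_self, smul_zero, zero_add]

end CollisionJacobian

theorem stmt_4_general {n R : Type*} [Fintype n] [DecidableEq n] [CommRing R]
    {M : Matrix n n R} (hM : IsUnit M.det) (s : n → R) {ω : n → R} {i : n}
    (hω : M i ⬝ᵥ ω = 1) (c : R) :
    let J := collisionJacobian (M⁻¹ * diagonal s * M) ω (M i) c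
    (∀ k, k ≠ i → J *ᵥ (M⁻¹ *ᵥ Pi.single k 1) = -s k • (M⁻¹ *ᵥ Pi.single k 1)) ∧
      M i ᵥ* J = c • M i :=
  ⟨fun k hk => collisionJacobian_mulVec_of_dotProduct_eq_zero
      (inv_mul_diagonal_mul_mulVec_inv_mulVec_single hM s k)
      (row_dotProduct_inv_mulVec_single_of_ne hM hk.symm) c,
    vecMul_collisionJacobian_of_dotProduct_eq_one (row_vecMul_inv_mul_diagonal_mul hM s i) hω c⟩

/-- For the MRT collision Jacobian `J = Λ(E-I) + cE` with `Λ = M⁻¹·S·M`,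
each column `v_k = M⁻¹·e_k` (for `k ≠ 0`, the non-conserved moments) is an
eigenvector of `J` with eigenvalue `-s_k`, and the all-ones vector is a left
eigenvector of `J` with eigenvalue `c`. -/
theorem stmt_4 (q : ℕ) (hq : 1 ≤ q) (M : Matrix (Fin q) (Fin q) ℝ) (hM : IsUnit M.det)
    (hrow : ∀ j, M ⟨0, hq⟩ j = 1) (s : Fin q → ℝ) (ω : Fin q → ℝ) (hω : ∑ k, ω k = 1)
    (c : ℝ) :
    let E := Matrix.vecMulVec ω (fun _ => (1 : ℝ))
    let Λ := M⁻¹ * Matrix.diagonal s * M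
    let J := Λ * (E - 1) + c • E
    (∀ k : Fin q, k ≠ ⟨0, hq⟩ →
      J.mulVec (M⁻¹.mulVec (Pi.single k 1)) = (-(s k)) • M⁻¹.mulVec (Pi.single k 1)) ∧
    Matrix.vecMul (fun _ => (1 : ℝ)) J = c • (fun _ => (1 : ℝ)) := by
  have hω_row : M ⟨0, hq⟩ ⬝ᵥ ω = 1 := by simpa only [dotProduct, hrow, one_mul] using hω
  simpa only [collisionJacobian, funext hrow] using stmt_4_general hM s hω_row c
end

section
/- Let s_0, s_1, s_2 ∈ ℝ and ω_0, ω_1 ∈ ℝ with ω_0 + 2ω_1 = 1. Let M be the 3×3 matrix with rows (1,1,1), (0,1,−1), (0,1,1), let S = diag(s_0, s_1, s_2), let Λ = M^{-1}·S·M, let ω = (ω_0, ω_1, ω_1), let E = ω𝟙ᵀ (the 3×3 matrix with entries E_{kj} = ω_{k}), and let W = diag(ω_0, ω_1, ω_1). Then the matrix Λ·(E − I)·W is symmetric. -/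
open Matrix

/-!
With `C = diag ω - ω ωᵀ`, the covariance matrix of the weights `ω`, one has `(E - I) W = -C`.
Congruence by `M` turns `C` into the covariance matrix `M C Mᵀ` of the moments `1, X, X²`, and
turns `Λ C` into `S (M C Mᵀ)`. The moments are pairwise uncorrelated: the total mass is `1`, so the
moment `1` is constant, and the odd moments of the symmetric weights vanish, so `X` and `X²` are
uncorrelated. Hence `M C Mᵀ` is diagonal, it commutes with `S`, and `Λ C` is symmetric.
-/

section Covariance

variable {m n R : Type*} [Fintype n] [DecidableEq n] [CommRing R]

/-- The covariance matrix `diag ω - ω ωᵀ` of the indicator functions of the points of `n` under the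
(signed) weights `ω`. If the rows of `M` are functions on `n`, their covariance matrix is
`M * weightCovariance ω * Mᵀ`. -/
def weightCovariance (ω : n → R) : Matrix n n R :=
  diagonal ω - vecMulVec ω ω

theorem vecMulVec_one_sub_one_mul_diagonal (ω : n → R) :
    (vecMulVec ω (fun _ => 1) - 1) * diagonal ω = -weightCovariance ω := by
  have one_vecMul_diagonal : (fun _ => 1) ᵥ* diagonal ω = ω := by
    ext i
    rw [vecMul_diagonal, one_mul]
  rw [sub_mul, one_mul, vecMulVec_mul, one_vecMul_diagonal, weightCovariance, neg_sub]

theorem mul_weightCovariance_mul_transpose (M : Matrix m n R) (ω : n → R) :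
    M * weightCovariance ω * Mᵀ =
      M * diagonal ω * Mᵀ - vecMulVec (M *ᵥ ω) (M *ᵥ ω) := by
  rw [weightCovariance, Matrix.mul_sub, Matrix.sub_mul, mul_vecMulVec,
    vecMulVec_mul, vecMul_transpose]

end Covariance

section Congruence

variable {n R : Type*} [Fintype n] [DecidableEq n] [CommRing R] {M : Matrix n n R}

theorem isSymm_of_isSymm_mul_mul_transpose {A : Matrix n n R} (hM : IsUnit M.det)
    (hA : (M * A * Mᵀ).IsSymm) : A.IsSymm := by
  have hMt : IsUnit Mᵀ.det := by rwa [det_transpose]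
  have hA' : M * Aᵀ * Mᵀ = M * A * Mᵀ := by
    simpa only [IsSymm, transpose_mul, transpose_transpose, ← Matrix.mul_assoc] using hA
  have hMA : M * Aᵀ = M * A := by
    simpa only [mul_nonsing_inv_cancel_right _ _ hMt] using congrArg (· * Mᵀ⁻¹) hA'
  simpa only [IsSymm, nonsing_inv_mul_cancel_left _ _ hM] using congrArg (M⁻¹ * ·) hMA

theorem isSymm_inv_mul_diagonal_mul_mul {C : Matrix n n R} {d : n → R} (hM : IsUnit M.det)
    (hC : M * C * Mᵀ = diagonal d) (s : n → R) : (M⁻¹ * diagonal s * M * C).IsSymm := by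
  apply isSymm_of_isSymm_mul_mul_transpose hM
  have congruence_eq : M * (M⁻¹ * diagonal s * M * C) * Mᵀ = diagonal s * (M * C * Mᵀ) := by
    simp only [Matrix.mul_assoc, mul_nonsing_inv_cancel_left _ _ hM]
  rw [congruence_eq, hC, diagonal_mul_diagonal]
  exact isSymm_diagonal _

theorem isSymm_relaxation_mul_equilibrium_sub_one_mul_diagonal {ω d : n → R}
    (hM : IsUnit M.det) (hω : M * weightCovariance ω * Mᵀ = diagonal d) (s : n → R) :
    (M⁻¹ * diagonal s * M * (vecMulVec ω (fun _ => 1) - 1) * diagonal ω).IsSymm := by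
  rw [Matrix.mul_assoc _ (_ - _), vecMulVec_one_sub_one_mul_diagonal, mul_neg]
  exact (isSymm_inv_mul_diagonal_mul_mul hM hω s).neg

end Congruence

section D1Q3

variable {R : Type*} [CommRing R]

/-- The natural transformation matrix of the D1Q3 model: its rows are the monomials `1, X, X²`
evaluated at the velocities, listed in the order `0, 1, -1`. -/
def d1q3Moments (R : Type*) [CommRing R] : Matrix (Fin 3) (Fin 3) R :=
  !![1, 1, 1; 0, 1, -1; 0, 1, 1]

theorem det_d1q3Moments : (d1q3Moments R).det = 2 := by
  simp [d1q3Moments, det_fin_three, one_add_one_eq_two]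

theorem d1q3Moments_mulVec (a b : R) :
    d1q3Moments R *ᵥ ![a, b, b] = ![a + 2 * b, 0, 2 * b] := by
  ext i
  fin_cases i <;> simp [d1q3Moments, mulVec] <;> ring

theorem d1q3Moments_mul_diagonal_mul_transpose (a b : R) :
    d1q3Moments R * diagonal ![a, b, b] * (d1q3Moments R)ᵀ =
      !![a + 2 * b, 0, 2 * b; 0, 2 * b, 0; 2 * b, 0, 2 * b] := by
  ext i j
  fin_cases i <;> fin_cases j <;>
    simp [d1q3Moments, mul_apply, Fin.sum_univ_three, vecMul_diagonal] <;> ring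

theorem d1q3Moments_mul_weightCovariance_mul_transpose {a b : R} (hsum : a + 2 * b = 1) :
    d1q3Moments R * weightCovariance ![a, b, b] * (d1q3Moments R)ᵀ =
      diagonal ![0, 2 * b, 2 * b * (1 - 2 * b)] := by
  rw [mul_weightCovariance_mul_transpose, d1q3Moments_mul_diagonal_mul_transpose,
    d1q3Moments_mulVec, hsum]
  ext i j
  fin_cases i <;> fin_cases j <;> simp
  ring

theorem stmt_8_general (h2 : IsUnit (2 : R)) (s : Fin 3 → R) {ω0 ω1 : R}
    (hsum : ω0 + 2 * ω1 = 1) :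
    let M := d1q3Moments R
    let ω := ![ω0, ω1, ω1]
    (M⁻¹ * diagonal s * M * (vecMulVec ω (fun _ => 1) - 1) * diagonal ω).IsSymm :=
  isSymm_relaxation_mul_equilibrium_sub_one_mul_diagonal (det_d1q3Moments (R := R) ▸ h2)
    (d1q3Moments_mul_weightCovariance_mul_transpose hsum) s

end D1Q3

/-- For the D1Q3 MRT lattice Boltzmann model with velocities `(0, 1, -1)`, natural
transformation matrix `M`, relaxation matrix `S = diag(s₀,s₁,s₂)`, weights
`ω = (ω₀, ω₁, ω₁)` with `ω₀ + 2ω₁ = 1`, equilibrium matrix `E = ω·𝟙ᵀ` and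
`W = diag(ω)`, the matrix `Λ·(E - I)·W` with `Λ = M⁻¹·S·M` is symmetric. -/
theorem stmt_8 (s0 s1 s2 ω0 ω1 : ℝ) (hsum : ω0 + 2 * ω1 = 1) :
    let M : Matrix (Fin 3) (Fin 3) ℝ := !![1, 1, 1; 0, 1, -1; 0, 1, 1]
    let S := Matrix.diagonal ![s0, s1, s2]
    let Λ := M⁻¹ * S * M
    let ω : Fin 3 → ℝ := ![ω0, ω1, ω1]
    let E := Matrix.vecMulVec ω (fun _ => (1 : ℝ))
    let W := Matrix.diagonal ω
    (Λ * (E - 1) * W).IsSymm :=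
  stmt_8_general two_ne_zero.isUnit ![s0, s1, s2] hsum
end

section
/- Let d ≥ 2, let ω̃ ≠ 0, and let ε ∈ ℝ with ε ≠ 1/2 and ε ≠ 5/6. Then: (i) there exists a unique nonzero real s (namely s = 6(2ε−1)/(6ε−5)) satisfying ε/4 = 1/24 − (1/4)(1 − 1/s) + (1/2 − 1/(2s))·ε; and (ii) if moreover (1/2 + 1/(2s))·ε² + 5ω̃ − 2ω̃/s ≠ 0, then there exists a unique nonzero real s' satisfying (1/2 + 1/(2s))·ε² = (2/s + 4/s' − 5)·ω̃. In other words, the fourth-order consistency system for the isotropic diffusion equation with s_{x_i} = 1 is uniquely solvable for the relaxation parameters s_{2|x_i²} = s and s_{2|x_ix_j} = s'. -/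
/-!
Both consistency conditions are affine in the reciprocal of their unknown, so each can be brought
to the form `b = a / x` with `a` and `b` independent of `x`. For nonzero `a` and `b` this has the
unique nonzero solution `x = a / b`. For the first condition `a = 6 * (2 * ε - 1)` and
`b = 6 * ε - 5`, which is where the exclusion of `ε = 1 / 2` and `ε = 5 / 6` comes from.
-/

theorem ne_zero_and_eq_div_iff {G₀ : Type*} [CommGroupWithZero G₀] {a b : G₀} (ha : a ≠ 0)
    (hb : b ≠ 0) (x : G₀) : (x ≠ 0 ∧ b = a / x) ↔ x = a / b := by
  constructor
  · rintro ⟨hx, h⟩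
    rwa [eq_div_iff hb, mul_comm, ← eq_div_iff hx]
  · rintro rfl
    exact ⟨div_ne_zero ha hb, (div_div_cancel₀ ha).symm⟩

section ConsistencyConditions

variable {K : Type*} [Field K]

/-- The first fourth-order consistency condition at `s_{x_i} = 1`, relating the diffusion
coefficient `ε` to the relaxation parameter `s = s_{2|x_i²}` of the diagonal moments. -/
def DiagonalCondition (ε s : K) : Prop :=
  ε / 4 = 1 / 24 - (1 / 4) * (1 - 1 / s) + (1 / 2 - 1 / (2 * s)) * ε

/-- The second fourth-order consistency condition at `s_{x_i} = 1`, which determines the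
relaxation parameter `s' = s_{2|x_ix_j}` of the mixed moments; `ω` stands for `ω̃`, the weight of
the diagonal velocities. -/
def MixedCondition (ε ω s s' : K) : Prop :=
  (1 / 2 + 1 / (2 * s)) * ε ^ 2 = (2 / s + 4 / s' - 5) * ω

/-- The coefficient of `s'` when `MixedCondition ε ω s s'` is cleared of the denominator `s'`,
leaving `4 * ω` on the other side. -/
def mixedCoefficient (ε ω s : K) : K :=
  (1 / 2 + 1 / (2 * s)) * ε ^ 2 + 5 * ω - 2 * ω / s

theorem diagonalCondition_iff_eq_div (h2 : (2 : K) ≠ 0) (h3 : (3 : K) ≠ 0) (ε s : K) :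
    DiagonalCondition ε s ↔ 6 * ε - 5 = 6 * (2 * ε - 1) / s := by
  have h4 : (4 : K) ≠ 0 := by
    convert mul_ne_zero h2 h2 using 1
    norm_num
  have h24 : (24 : K) ≠ 0 := by
    convert mul_ne_zero (mul_ne_zero h2 h3) h4 using 1
    norm_num
  have difference_eq :
      1 / 24 - (1 / 4) * (1 - 1 / s) + (1 / 2 - 1 / (2 * s)) * ε - ε / 4 =
        (6 * ε - 5 - 6 * (2 * ε - 1) / s) / 24 := by
    simp only [div_eq_mul_inv, mul_inv]
    generalize s⁻¹ = t
    field_simp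
    ring
  rw [DiagonalCondition, eq_comm, ← sub_eq_zero, difference_eq, div_eq_zero_iff,
    or_iff_left h24, sub_eq_zero]

theorem ne_zero_and_diagonalCondition_iff (h2 : (2 : K) ≠ 0) (h3 : (3 : K) ≠ 0) {ε : K}
    (hε1 : ε ≠ 1 / 2) (hε2 : ε ≠ 5 / 6) (s : K) :
    (s ≠ 0 ∧ DiagonalCondition ε s) ↔ s = 6 * (2 * ε - 1) / (6 * ε - 5) := by
  have h6 : (6 : K) ≠ 0 := by
    convert mul_ne_zero h2 h3 using 1
    norm_num
  have numerator_ne_zero : 6 * (2 * ε - 1) ≠ 0 := by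
    refine mul_ne_zero h6 (sub_ne_zero.2 fun h => hε1 ?_)
    rwa [eq_div_iff h2, mul_comm]
  have denominator_ne_zero : 6 * ε - 5 ≠ 0 := by
    refine sub_ne_zero.2 fun h => hε2 ?_
    rwa [eq_div_iff h6, mul_comm]
  rw [diagonalCondition_iff_eq_div h2 h3]
  exact ne_zero_and_eq_div_iff numerator_ne_zero denominator_ne_zero s

theorem mixedCondition_iff_eq_div (ε ω s s' : K) :
    MixedCondition ε ω s s' ↔ mixedCoefficient ε ω s = 4 * ω / s' := by
  have difference_eq :
      (1 / 2 + 1 / (2 * s)) * ε ^ 2 - (2 / s + 4 / s' - 5) * ω =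
        mixedCoefficient ε ω s - 4 * ω / s' := by
    rw [mixedCoefficient]
    ring
  rw [MixedCondition, ← sub_eq_zero, difference_eq, sub_eq_zero]

theorem ne_zero_and_mixedCondition_iff (h2 : (2 : K) ≠ 0) {ε ω s : K} (hω : ω ≠ 0)
    (hs : mixedCoefficient ε ω s ≠ 0) (s' : K) :
    (s' ≠ 0 ∧ MixedCondition ε ω s s') ↔ s' = 4 * ω / mixedCoefficient ε ω s := by
  have h4 : (4 : K) ≠ 0 := by
    convert mul_ne_zero h2 h2 using 1
    norm_num
  rw [mixedCondition_iff_eq_div]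
  exact ne_zero_and_eq_div_iff (mul_ne_zero h4 hω) hs s'

theorem stmt_13_general (h2 : (2 : K) ≠ 0) (h3 : (3 : K) ≠ 0) {ω ε : K} (hω : ω ≠ 0)
    (hε1 : ε ≠ 1 / 2) (hε2 : ε ≠ 5 / 6) :
    (∃! s : K, s ≠ 0 ∧ DiagonalCondition ε s) ∧
    (6 * (2 * ε - 1) / (6 * ε - 5) ≠ 0 ∧
      DiagonalCondition ε (6 * (2 * ε - 1) / (6 * ε - 5))) ∧
    ∀ s : K, s ≠ 0 → mixedCoefficient ε ω s ≠ 0 →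
      ∃! s' : K, s' ≠ 0 ∧ MixedCondition ε ω s s' := by
  have diagonal_iff := ne_zero_and_diagonalCondition_iff h2 h3 hε1 hε2
  refine ⟨?_, (diagonal_iff _).2 rfl, fun s _ hs => ?_⟩
  · simp only [diagonal_iff, existsUnique_eq]
  · simp only [ne_zero_and_mixedCondition_iff h2 hω hs, existsUnique_eq]

end ConsistencyConditions

/-- Unique solvability of the fourth-order consistency system for the isotropic
diffusion equation with `s_{x_i} = 1`: (i) there is a unique nonzero real `s`
(namely `s = 6(2ε-1)/(6ε-5)`) with `ε/4 = 1/24 - (1/4)(1 - 1/s) + (1/2 - 1/(2s))·ε`;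
(ii) for that `s`, if `(1/2 + 1/(2s))ε² + 5ω̃ - 2ω̃/s ≠ 0`, there is a unique nonzero
real `s'` with `(1/2 + 1/(2s))ε² = (2/s + 4/s' - 5)·ω̃`. -/
theorem stmt_13 (d : ℕ) (hd : 2 ≤ d) (ωt ε : ℝ) (hωt : ωt ≠ 0)
    (hε1 : ε ≠ 1 / 2) (hε2 : ε ≠ 5 / 6) :
    (∃! s : ℝ, s ≠ 0 ∧
      ε / 4 = 1 / 24 - (1 / 4) * (1 - 1 / s) + (1 / 2 - 1 / (2 * s)) * ε) ∧
    (6 * (2 * ε - 1) / (6 * ε - 5) ≠ 0 ∧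
      ε / 4 = 1 / 24 - (1 / 4) * (1 - 1 / (6 * (2 * ε - 1) / (6 * ε - 5))) +
        (1 / 2 - 1 / (2 * (6 * (2 * ε - 1) / (6 * ε - 5)))) * ε) ∧
    (∀ s : ℝ, s ≠ 0 →
      ε / 4 = 1 / 24 - (1 / 4) * (1 - 1 / s) + (1 / 2 - 1 / (2 * s)) * ε →
      (1 / 2 + 1 / (2 * s)) * ε ^ 2 + 5 * ωt - 2 * ωt / s ≠ 0 →
      ∃! s' : ℝ, s' ≠ 0 ∧
        (1 / 2 + 1 / (2 * s)) * ε ^ 2 = (2 / s + 4 / s' - 5) * ωt) := by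
  obtain ⟨diagonal_unique, diagonal_solution, mixed_unique⟩ :=
    stmt_13_general two_ne_zero three_ne_zero hωt hε1 hε2
  exact ⟨diagonal_unique, diagonal_solution, fun s hs _ => mixed_unique s hs⟩
end

section
/- Let η ≠ 0, Δt > 0 and s̃ ≠ 0 be real numbers such that D := (s̃ − 4Δtη + Δt²s̃η² + 2Δts̃η)/s̃ ≥ 0 and Δtη + 1 − √D ≠ 0, and define s := 2ηΔt/(Δtη − √D + 1). Then s ≠ 0 and the identity 1/s̃ − 1/2 = (1/s − 1/2) + Δtη·(1/s)·(1 − 1/s) holds; equivalently, writing ε̃ = (1/s̃ − 1/2)·C and ε = (1/s − 1/2)·C for any constant C, one has ε̃ = ε + (Δt/s)·(1 − 1/s)·η·C. -/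
/-!
In terms of `x = 1/s`, `y = 1/s̃` and `a = Δtη`, the claimed identity is the quadratic equation
`a x² - (a + 1) x + y = 0`. Its discriminant `(a + 1)² - 4 a y` is `D`, and `s` is chosen so that
`1/s = (a + 1 - √D) / (2a)` is one of the two roots.
-/

theorem sub_eq_sub_add_mul_iff_quadratic_eq_zero {R : Type*} [CommRing R] (a c x y : R) :
    y - c = (x - c) + a * x * (1 - x) ↔ a * (x * x) + -(a + 1) * x + y = 0 := by
  constructor <;> intro h <;> linear_combination h

section RelaxationParameter

variable {K : Type*} [Field K]

theorem discrim_relaxation (η Δt : K) {st : K} (hst : st ≠ 0) :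
    discrim (Δt * η) (-(Δt * η + 1)) (1 / st) =
      (st - 4 * Δt * η + Δt ^ 2 * st * η ^ 2 + 2 * Δt * st * η) / st := by
  rw [discrim]
  field_simp
  ring

theorem stmt_14_general [NeZero (2 : K)] {η Δt st r s : K}
    (hη : η ≠ 0) (hΔt : Δt ≠ 0) (hst : st ≠ 0)
    (hr : r ^ 2 = (st - 4 * Δt * η + Δt ^ 2 * st * η ^ 2 + 2 * Δt * st * η) / st)
    (hden : Δt * η + 1 - r ≠ 0) (hs : s = 2 * η * Δt / (Δt * η - r + 1)) :
    s ≠ 0 ∧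
    1 / st - 1 / 2 = (1 / s - 1 / 2) + Δt * η * (1 / s) * (1 - 1 / s) ∧
    ∀ C : K, (1 / st - 1 / 2) * C = (1 / s - 1 / 2) * C + (Δt / s) * (1 - 1 / s) * η * C := by
  rw [sub_add_eq_add_sub] at hs
  have s_ne_zero : s ≠ 0 :=
    hs ▸ div_ne_zero (mul_ne_zero (mul_ne_zero two_ne_zero hη) hΔt) hden
  have discrim_eq : discrim (Δt * η) (-(Δt * η + 1)) (1 / st) = r * r := by
    rw [discrim_relaxation η Δt hst, ← hr, sq]
  have inv_s_eq_root : 1 / s = (-(-(Δt * η + 1)) - r) / (2 * (Δt * η)) := by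
    rw [hs, one_div_div, neg_neg, mul_assoc, mul_comm η]
  have relaxation_eq : 1 / st - 1 / 2 = (1 / s - 1 / 2) + Δt * η * (1 / s) * (1 - 1 / s) :=
    (sub_eq_sub_add_mul_iff_quadratic_eq_zero ..).2 <|
      (quadratic_eq_zero_iff (mul_ne_zero hΔt hη) discrim_eq _).2 (.inr inv_s_eq_root)
  refine ⟨s_ne_zero, relaxation_eq, fun C => ?_⟩
  rw [relaxation_eq]
  ring

end RelaxationParameter

/-- Closed-form solution for the first-order relaxation parameter with a linear source:
if `D = (s̃ - 4Δtη + Δt²s̃η² + 2Δts̃η)/s̃ ≥ 0`, `Δtη + 1 - √D ≠ 0` and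
`s = 2ηΔt/(Δtη - √D + 1)`, then `s ≠ 0` and
`1/s̃ - 1/2 = (1/s - 1/2) + Δtη·(1/s)·(1 - 1/s)`; equivalently, for any constant `C`,
`(1/s̃ - 1/2)·C = (1/s - 1/2)·C + (Δt/s)·(1 - 1/s)·η·C`. -/
theorem stmt_14 (η Δt st : ℝ) (hη : η ≠ 0) (hΔt : 0 < Δt) (hst : st ≠ 0)
    (D : ℝ) (hD : D = (st - 4 * Δt * η + Δt ^ 2 * st * η ^ 2 + 2 * Δt * st * η) / st)
    (hD0 : 0 ≤ D) (hden : Δt * η + 1 - Real.sqrt D ≠ 0)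
    (s : ℝ) (hs : s = 2 * η * Δt / (Δt * η - Real.sqrt D + 1)) :
    s ≠ 0 ∧
    1 / st - 1 / 2 = (1 / s - 1 / 2) + Δt * η * (1 / s) * (1 - 1 / s) ∧
    ∀ C : ℝ, (1 / st - 1 / 2) * C = (1 / s - 1 / 2) * C + (Δt / s) * (1 - 1 / s) * η * C :=
  stmt_14_general hη hΔt.ne' hst ((Real.sq_sqrt hD0).trans hD) hden hs
end
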